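/- arXiv:math/0411533 — 2 statements merged into one kernel-verified Lean document; each statement's English description precedes it below -/
import Mathlib

section
/- Let K be a number field with algebraic closure K̄ and let σ ∈ Gal(K̄/K). Then the following are equivalent: (1) the fixed field K̄^σ admits an embedding into ℝ (there exists a ring homomorphism K̄^σ → ℝ); (2) σ has order exactly 2 in Gal(K̄/K). -/
/-! The two implications are proved separately; write `F` for the fixed field `K̄^σ`.

**Embedding implies order two.** An embedding `F → ℝ` extends to `φ : K̄ → ℂ`, and complex
conjugation restricts along `φ` to some `c ∈ Gal(K̄/F)`. By the infinite Galois correspondence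
`Gal(K̄/F)` is the closure of the group generated by `σ`, so `c` commutes with `σ` and `σ`
preserves `R = K̄^c = φ⁻¹(ℝ)`. The elements of `R` with nonnegative image in `ℝ` are exactly the
squares in `R`, so `σ` preserves the ordering which `R` inherits from `ℝ`. This ordering is
archimedean, so `σ` is the identity on `R`. As `K̄ = R + iR` and `σ i = ± i`, it follows
that `σ² = 1`; and `σ ≠ 1` because `i ∉ F`.

**Order two implies embedding.** As in Artin–Schreier, norms from `K̄` to `F` show that `σ i = -i`
and that sums of squares in `F` are squares. If `x = y²` with `x ∈ F`, then `σ y = ± y`, so `y` or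
`i y` lies in `F`; thus exactly one of `x` and `-x` is a square in `F` when `x ≠ 0`, and the squares
form the nonnegative cone of a field ordering on `F`. An ordered field algebraic over `ℚ`
is archimedean (its valuation ring of bounded elements contains `ℚ` and is integrally closed), and
an archimedean ordered field embeds in `ℝ`. -/

section OrderTwo

variable {L : Type*} [Field L]

/-- A field automorphism of order two negates every square root `i` of `-1`: if `i` is fixed,
take `α ≠ 0` with `σ α = -α` and `β² = α`; the norm `n = β * σ β` is fixed and `n² = -α²`, so `n = ± i α` would be
negated by `σ`. -/
lemma map_i_eq_neg_of_involutive [CharZero L] [IsAlgClosed L] (σ : L ≃+* L)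
    (h2 : ∀ x, σ (σ x) = x) (h1 : ∃ x, σ x ≠ x) {i : L} (hi : i * i = -1) : σ i = -i := by
  have hsq : σ i * σ i = -1 := by rw [← map_mul, hi, map_neg, map_one]
  rcases mul_self_eq_mul_self_iff.1 (hsq.trans hi.symm) with hfix | h
  · exfalso
    obtain ⟨z, hz⟩ := h1
    obtain ⟨β, hβ⟩ := IsAlgClosed.exists_pow_nat_eq (z - σ z) (n := 2) (by norm_num)
    have hα : z - σ z ≠ 0 := sub_ne_zero.2 (Ne.symm hz)
    have hσβ : σ β ^ 2 = -(z - σ z) := by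
      rw [← map_pow, hβ, map_sub, h2]; ring
    have hn : (β * σ β) * (β * σ β) = (i * (z - σ z)) * (i * (z - σ z)) := by
      linear_combination σ β ^ 2 * hβ + (z - σ z) * hσβ - (z - σ z) ^ 2 * hi
    have hfixn : σ (β * σ β) = β * σ β := by rw [map_mul, h2, mul_comm]
    have hneg : σ (i * (z - σ z)) = -(i * (z - σ z)) := by
      rw [map_mul, map_sub, h2, hfix]; ring
    have hi0 : i ≠ 0 := by rintro rfl; simp at hi
    have hne : i * (z - σ z) ≠ 0 := mul_ne_zero hi0 hα
    rcases mul_self_eq_mul_self_iff.1 hn with h | h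
    · rw [h, hneg] at hfixn
      exact hne (self_eq_neg.1 hfixn.symm)
    · rw [h, map_neg, hneg, neg_neg] at hfixn
      exact hne (self_eq_neg.1 hfixn)
  · exact h

/-- If the squares in a field are closed under addition and, for each `x ≠ 0`, exactly one of `x` and
`-x` is a square, then the squares are the nonnegative cone of a field ordering. -/
lemma exists_order_of_squares {F : Type*} [Field F]
    (hadd : ∀ a b : F, IsSquare (a * a + b * b))
    (htot : ∀ x : F, IsSquare x ∨ IsSquare (-x))
    (hanti : ∀ x : F, IsSquare x → IsSquare (-x) → x = 0) :
    ∃ _ : LinearOrder F, IsStrictOrderedRing F := by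
  classical
  let C : RingCone F :=
    { carrier := {x | IsSquare x}
      mul_mem' := fun ha hb => IsSquare.mul ha hb
      one_mem' := IsSquare.one
      add_mem' := by
        rintro _ _ ⟨a, rfl⟩ ⟨b, rfl⟩
        exact hadd a b
      zero_mem' := IsSquare.zero
      eq_zero_of_mem_of_neg_mem' := fun {x} h h' => hanti x h h' }
  have : HasMemOrNegMem C := ⟨htot⟩
  let o : LinearOrder F := LinearOrder.mkOfAddGroupCone C
  have : IsOrderedRing F := by exact IsOrderedRing.mkOfCone C
  exact ⟨o, IsOrderedRing.toIsStrictOrderedRing F⟩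

/-- The valuation ring of bounded elements contains `ℚ` and is integrally closed, hence contains
everything algebraic over `ℚ`. -/
lemma archimedean_of_isAlgebraic_rat {F : Type*} [Field F] [LinearOrder F] [IsStrictOrderedRing F]
    [Algebra.IsAlgebraic ℚ F] : Archimedean F := by
  let V := (ArchimedeanClass.addValuation F).toValuation.valuationSubring
  have hV : ∀ x : F, x ∈ V ↔ 0 ≤ ArchimedeanClass.mk x := fun x => Iff.rfl
  let f : ℚ →+* V := (algebraMap ℚ F).codRestrict V fun q => by
    rw [hV, eq_ratCast]; exact ArchimedeanClass.mk_ratCast_nonneg q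
  rw [archimedean_iff_nat_le]
  intro x
  obtain ⟨p, hp, hx⟩ := (Algebra.IsAlgebraic.isAlgebraic (R := ℚ) x).isIntegral
  have hint : IsIntegral V x := by
    refine ⟨p.map f, hp.map f, ?_⟩
    rw [Polynomial.eval₂_map]
    exact hx
  obtain ⟨y, rfl⟩ := IsIntegrallyClosed.isIntegral_iff.1 hint
  obtain ⟨n, hn⟩ := (hV _).1 y.2
  exact ⟨n, (le_abs_self _).trans (by simpa using! hn)⟩

lemma exists_embedding_of_involutive [CharZero L] [IsAlgClosed L] [Algebra.IsAlgebraic ℚ L]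
    (σ : L ≃+* L) (h2 : ∀ x, σ (σ x) = x) (h1 : ∃ x, σ x ≠ x)
    (F : Subfield L) (hF : ∀ x, x ∈ F ↔ σ x = x) : Nonempty (F →+* ℝ) := by
  obtain ⟨i, hi⟩ := IsAlgClosed.exists_pow_nat_eq (-1 : L) (n := 2) (by norm_num)
  have hi' : i * i = -1 := by rw [← hi, sq]
  have hσi : σ i = -i := map_i_eq_neg_of_involutive σ h2 h1 hi'
  have hfix : ∀ x : F, σ x = x := fun x => (hF x).1 x.2
  have key : ∃ _ : LinearOrder F, IsStrictOrderedRing F := by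
    refine exists_order_of_squares ?_ ?_ ?_
    · intro a b
      -- `a² + b²` is the norm of `a + ib = w²`, hence the square of the norm of `w`
      obtain ⟨w, hw⟩ := IsAlgClosed.exists_pow_nat_eq ((a : L) + i * b) (n := 2) (by norm_num)
      have hσw : σ w ^ 2 = a - i * b := by
        rw [← map_pow, hw, map_add, map_mul, hfix, hfix, hσi]; ring
      refine ⟨⟨w * σ w, (hF _).2 (by rw [map_mul, h2, mul_comm])⟩, Subtype.ext ?_⟩
      push_cast
      linear_combination (-σ w ^ 2) * hw - (a + i * b) * hσw + (b : L) ^ 2 * hi'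
    · intro x
      obtain ⟨y, hy⟩ := IsAlgClosed.exists_pow_nat_eq (x : L) (n := 2) (by norm_num)
      have hy2 : σ y * σ y = y * y := by
        rw [← map_mul, ← sq, hy, hfix]
      rcases mul_self_eq_mul_self_iff.1 hy2 with h | h
      · exact .inl ⟨⟨y, (hF _).2 h⟩, Subtype.ext (by push_cast; rw [← hy, sq])⟩
      · refine .inr ⟨⟨i * y, (hF _).2 (by rw [map_mul, h, hσi]; ring)⟩, Subtype.ext ?_⟩
        push_cast
        linear_combination hy - y ^ 2 * hi'
    · rintro x ⟨a, ha⟩ ⟨b, hb⟩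
      have ha' : (x : L) = a * a := by exact_mod_cast congrArg Subtype.val ha
      have hb' : -(x : L) = b * b := by exact_mod_cast congrArg Subtype.val hb
      have hab : (a : L) * a = (i * b) * (i * b) := by
        linear_combination -ha' - hb' - (b : L) ^ 2 * hi'
      have hneg : σ (i * b) = -(i * b) := by rw [map_mul, hfix, hσi]; ring
      have hzero : (a : L) = 0 := by
        have hfa := hfix a
        rcases mul_self_eq_mul_self_iff.1 hab with h | h
        · rw [h, hneg] at hfa
          rw [h]; exact self_eq_neg.1 hfa.symm
        · rw [h, map_neg, hneg, neg_neg] at hfa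
          rw [h, self_eq_neg.1 hfa, neg_zero]
      exact Subtype.ext (by rw [ha', hzero]; simp)
  obtain ⟨_, _⟩ := key
  have : Algebra.IsAlgebraic ℚ F :=
    Algebra.IsAlgebraic.of_injective (algebraMap F L).toRatAlgHom (algebraMap F L).injective
  have := archimedean_of_isAlgebraic_rat (F := F)
  exact ⟨(ConditionallyCompleteLinearOrderedField.inducedOrderRingHom F ℝ : F →+* ℝ)⟩

end OrderTwo

section RealEmbedding

variable {L : Type*} [Field L]

/-- Let complex conjugation restrict along `φ : L → ℂ` to `c`. An automorphism commuting with `c`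
preserves the squares of the fixed field of `c`, that is, its ordering induced by `φ`; since
`ℚ` is dense in `ℝ`, it is the identity there. -/
lemma fix_of_commute_conj [CharZero L] [IsAlgClosed L] (φ : L →+* ℂ) (c σ : L ≃+* L)
    (hc : ∀ x, φ (c x) = starRingEnd ℂ (φ x)) (hcomm : ∀ x, c (σ x) = σ (c x))
    {x : L} (hx : c x = x) : σ x = x := by
  have hre : ∀ y, c y = y → φ y = ((φ y).re : ℂ) := fun y hy =>
    (Complex.conj_eq_iff_re.1 (by rw [← hc, hy])).symm
  have hfix : ∀ (τ : L ≃+* L), (∀ x, c (τ x) = τ (c x)) → ∀ y, c y = y → c (τ y) = τ y :=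
    fun τ hτ y hy => by rw [hτ, hy]
  have hpos : ∀ (τ : L ≃+* L), (∀ x, c (τ x) = τ (c x)) → ∀ y, c y = y →
      0 ≤ (φ y).re → 0 ≤ (φ (τ y)).re := by
    intro τ hτ y hy h0
    obtain ⟨w, hw⟩ := IsAlgClosed.exists_pow_nat_eq y (n := 2) (by norm_num)
    -- A square root of a nonnegative real number is real.
    have hwc : c w = w := by
      have hw2 : φ w ^ 2 = ((φ y).re : ℂ) := by rw [← map_pow, hw, ← hre y hy]
      have hs : φ w * φ w = (Real.sqrt (φ y).re : ℂ) * (Real.sqrt (φ y).re : ℂ) := by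
        rw [← sq, hw2, ← Complex.ofReal_mul, Real.mul_self_sqrt h0]
      apply φ.injective
      rw [hc]
      rcases mul_self_eq_mul_self_iff.1 hs with h | h <;> rw [h] <;> simp
    have hτw := hre (τ w) (hfix τ hτ w hwc)
    rw [← hw, map_pow, map_pow, hτw, ← Complex.ofReal_pow, Complex.ofReal_re]
    positivity
  have hle : ∀ (τ : L ≃+* L), (∀ x, c (τ x) = τ (c x)) → ∀ y, c y = y →
      (φ (τ y)).re ≤ (φ y).re := by
    intro τ hτ y hy
    by_contra! hlt
    obtain ⟨q, hq1, hq2⟩ := exists_rat_btwn hlt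
    have := hpos τ hτ ((q : L) - y) (by simp [hy]) (by simp [hq1.le])
    simp at this
    linarith
  have hsymm : ∀ y, c (σ.symm y) = σ.symm (c y) := by
    intro y
    apply σ.injective
    rw [← hcomm]; simp
  have h1 := hle σ hcomm x hx
  have h2 := hle σ.symm hsymm (σ x) (hfix σ hcomm x hx)
  rw [RingEquiv.symm_apply_apply] at h2
  apply φ.injective
  rw [hre _ hx, hre _ (hfix σ hcomm x hx), le_antisymm h1 h2]

lemma involutive_of_commute_conj [CharZero L] [IsAlgClosed L] (φ : L →+* ℂ) (c σ : L ≃+* L)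
    (hc : ∀ x, φ (c x) = starRingEnd ℂ (φ x)) (hcomm : ∀ x, c (σ x) = σ (c x)) (z : L) :
    σ (σ z) = z := by
  obtain ⟨i, hi⟩ := IsAlgClosed.exists_pow_nat_eq (-1 : L) (n := 2) (by norm_num)
  have hi' : i * i = -1 := by rw [← hi, sq]
  have hcc : ∀ x, c (c x) = x := fun x => φ.injective (by rw [hc, hc, Complex.conj_conj])
  have hci : c i = -i := by
    have h := Complex.I_mul_I
    have hφ : φ i * φ i = Complex.I * Complex.I := by rw [← map_mul, hi', h]; simp
    apply φ.injective
    rw [hc, map_neg]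
    rcases mul_self_eq_mul_self_iff.1 hφ with h | h <;> rw [h] <;> simp
  have hσi : σ (σ i) = i := by
    have hsq : σ i * σ i = i * i := by rw [← map_mul, hi', map_neg, map_one]
    rcases mul_self_eq_mul_self_iff.1 hsq with h | h
    · rw [h, h]
    · rw [h, map_neg, h, neg_neg]
  have ha := fix_of_commute_conj φ c σ hc hcomm (x := z + c z) (by rw [map_add, hcc, add_comm])
  have hb := fix_of_commute_conj φ c σ hc hcomm (x := i * (z - c z))
    (by rw [map_mul, map_sub, hcc, hci]; ring)
  -- `2 z = (z + c z) - i * (i * (z - c z))`, with both bracketed terms fixed by `σ`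
  have hz : 2 * z = (z + c z) - i * (i * (z - c z)) := by
    linear_combination (z - c z) * hi'
  have h2z : σ (σ (2 * z)) = 2 * z := by
    rw [hz, map_sub, ha, map_mul, hb, map_sub, ha, map_mul, hb, hσi]
  rw [map_mul, map_mul, map_ofNat, map_ofNat] at h2z
  exact mul_left_cancel₀ two_ne_zero h2z

/-- A real embedding of `F` extends to a complex embedding of an algebraic closure, along which
complex conjugation restricts to an automorphism over `F`. -/
lemma exists_lift_conj {F : Type*} [Field F] [Algebra F L] [CharZero F] [IsAlgClosed L]
    [Algebra.IsAlgebraic F L] (ψ : F →+* ℝ) :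
    ∃ (φ : L →+* ℂ) (c : L ≃ₐ[F] L), ∀ x, φ (c x) = starRingEnd ℂ (φ x) := by
  let _ : Algebra F ℂ := ((algebraMap ℝ ℂ).comp ψ).toAlgebra
  let φ : L →ₐ[F] ℂ := IsAlgClosed.lift
  let _ : Algebra L ℂ := φ.toRingHom.toAlgebra
  have : IsScalarTower F L ℂ := .of_algebraMap_eq fun x => (φ.commutes x).symm
  have : IsAlgClosure F L := ⟨inferInstance, inferInstance⟩
  have : Normal F L := IsAlgClosure.normal F L
  let conj : ℂ ≃ₐ[F] ℂ := AlgEquiv.ofRingEquiv (f := starRingAut) fun x =>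
    Complex.conj_ofReal (ψ x)
  exact ⟨φ.toRingHom, conj.restrictNormal L, fun x => conj.restrictNormal_commutes L x⟩

end RealEmbedding

/-- An automorphism fixing the fixed field of `σ` pointwise lies in the Krull closure of the group
generated by `σ`, hence commutes with `σ`. -/
lemma commute_of_mem_fixingSubgroup {k L : Type*} [Field k] [Field L] [Algebra k L] [IsGalois k L]
    (σ c : L ≃ₐ[k] L)
    (hc : ∀ x ∈ IntermediateField.fixedField (Subgroup.zpowers σ), c x = x) : c * σ = σ * c := by
  let H : ClosedSubgroup (L ≃ₐ[k] L) :=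
    ⟨(Subgroup.zpowers σ).topologicalClosure, Subgroup.isClosed_topologicalClosure _⟩
  have hmem : c ∈ H.1 := by
    rw [← InfiniteGalois.fixingSubgroup_fixedField H, IntermediateField.mem_fixingSubgroup_iff]
    intro x hx
    refine hc x ?_
    rw [IntermediateField.mem_fixedField_iff] at hx ⊢
    exact fun f hf => hx f (Subgroup.le_topologicalClosure _ hf)
  have hle : (Subgroup.zpowers σ).topologicalClosure ≤ Subgroup.centralizer {σ} := by
    refine Subgroup.topologicalClosure_minimal _ ?_ (Set.isClosed_centralizer _)
    rw [Subgroup.zpowers_le, Subgroup.mem_centralizer_singleton_iff]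
  exact Subgroup.mem_centralizer_singleton_iff.1 (hle hmem)


/-- Lemma `lem:real2`: for a number field `K` with algebraic closure `K̄` and
`σ ∈ Gal(K̄/K)`, the fixed field `K̄^σ` admits a ring homomorphism into `ℝ` if and only if
`σ` has order exactly `2` (i.e. `σ` is a complex conjugation automorphism). -/
theorem fixed_field_real_embedding_iff_order_two
    (K : Type*) [Field K] [NumberField K]
    (Kbar : Type*) [Field Kbar] [Algebra K Kbar] [IsAlgClosure K Kbar]
    (σ : Kbar ≃ₐ[K] Kbar) :
    Nonempty (↥(IntermediateField.fixedField (Subgroup.zpowers σ)) →+* ℝ) ↔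
      orderOf σ = 2 := by
  have : IsAlgClosed Kbar := IsAlgClosure.isAlgClosed K
  have : Algebra.IsAlgebraic K Kbar := IsAlgClosure.isAlgebraic
  have : CharZero Kbar := charZero_of_injective_algebraMap (algebraMap K Kbar).injective
  have : Algebra.IsAlgebraic ℚ Kbar := Algebra.IsAlgebraic.trans ℚ K Kbar
  have : IsGalois K Kbar := {}
  have hmem : ∀ x, x ∈ IntermediateField.fixedField (Subgroup.zpowers σ) ↔ σ x = x := by
    intro x
    rw [IntermediateField.mem_fixedField_iff]
    refine ⟨fun h => h σ (Subgroup.mem_zpowers σ), fun h f hf => ?_⟩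
    have hle : Subgroup.zpowers σ ≤ MulAction.stabilizer (Kbar ≃ₐ[K] Kbar) x :=
      Subgroup.zpowers_le.2 h
    exact hle hf
  constructor
  · rintro ⟨ψ⟩
    have : Algebra.IsAlgebraic (IntermediateField.fixedField (Subgroup.zpowers σ)) Kbar :=
      Algebra.IsAlgebraic.tower_top (K := K) _
    obtain ⟨φ, c, hc⟩ := exists_lift_conj (L := Kbar) ψ
    have hcomm : c.restrictScalars K * σ = σ * c.restrictScalars K :=
      commute_of_mem_fixingSubgroup σ _ fun x hx => c.commutes ⟨x, hx⟩
    rw [orderOf_eq_prime_iff]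
    constructor
    · ext z
      rw [sq]
      exact involutive_of_commute_conj φ c.toRingEquiv σ.toRingEquiv hc
        (fun x => DFunLike.congr_fun hcomm x) z
    · rintro rfl
      -- a square root of `-1` would lie in the fixed field, hence map to one in `ℝ`
      obtain ⟨i, hi⟩ := IsAlgClosed.exists_pow_nat_eq (-1 : Kbar) (n := 2) (by norm_num)
      have h : ψ ⟨i, (hmem i).2 rfl⟩ ^ 2 = -1 := by
        rw [← map_pow, ← map_one ψ, ← map_neg]
        exact congrArg ψ (Subtype.ext hi)
      nlinarith [sq_nonneg (ψ ⟨i, (hmem i).2 rfl⟩)]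
  · intro h
    obtain ⟨h2, h1⟩ := orderOf_eq_prime_iff.1 h
    refine exists_embedding_of_involutive σ.toRingEquiv (fun x => ?_) ?_
      (IntermediateField.fixedField (Subgroup.zpowers σ)).toSubfield hmem
    · rw [sq] at h2
      exact DFunLike.congr_fun h2 x
    · by_contra! hall
      exact h1 (AlgEquiv.ext hall)
end

section
/- Let K be a number field with algebraic closure K̄ and let σ ∈ Gal(K̄/K). If σ is not a complex conjugation automorphism (i.e., the order of σ in Gal(K̄/K) is not 2), then there exists a totally imaginary finite extension L of K with L ⊆ K̄^σ. -/
/-!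
The proof is by contraposition and is a small instance of Artin–Schreier theory. Let `F` be the
fixed field of `σ`. If every finite extension `L ⊆ F` of `K` has a real embedding, a compactness
argument (`exists_realEmbedding_of_finite`: each element of `F` has only finitely many possible
real images, the real roots of its minimal polynomial) produces a real embedding of `F` itself.
It extends to `ψ : K̄ → ℂ`, and since `K̄ / F` is normal, complex conjugation restricts along `ψ`
to some `τ ∈ Gal(K̄/F)` (`exists_conjugation`).

As `σ` generates `Gal(K̄/F)` topologically, `τ` commutes with `σ` (`commute_of_fixes_fixedField`),
so `σ` preserves the real closed field `K̄^τ`. There the positive elements are the nonzero squares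
and `ℚ` is dense, hence `σ` is trivial on `K̄^τ` (`apply_eq_self_of_conjugation_fixed`). Since
`σ` moves `√-1` (otherwise `√-1` would lie in `F`, which has a real embedding) and
`K̄ = K̄^τ(√-1)`, it follows that `σ = τ` has order `2`.
-/

/-- If every finite subextension of an algebraic extension `F` of the number field `K` has a real
embedding, then so does `F`. -/
theorem exists_realEmbedding_of_finite
    {K : Type*} [Field K] [NumberField K] {E : Type*} [Field E] [Algebra K E]
    [Algebra.IsAlgebraic K E] (F : IntermediateField K E)
    (h : ∀ L : IntermediateField K E, FiniteDimensional K L → L ≤ F → Nonempty (L →+* ℝ)) :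
    Nonempty (F →+* ℝ) := by
  classical
  have : CharZero E := charZero_of_injective_algebraMap (algebraMap K E).injective
  have : Algebra.IsAlgebraic ℚ E := Algebra.IsAlgebraic.trans ℚ K E
  have hint (a : F) : IsIntegral ℚ (a : E) := Algebra.IsIntegral.isIntegral _
  let β : F → Type := fun a => (minpoly ℚ (a : E)).rootSet ℝ
  have key (s : Finset F) : ∃ (L : IntermediateField K E) (_ : ∀ a ∈ s, (a : E) ∈ L),
      Nonempty (L →+* ℝ) := by
    have hfin : FiniteDimensional K
        (IntermediateField.adjoin K ((fun a : F => (a : E)) '' (s : Set F))) := by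
      have : Finite ((fun a : F => (a : E)) '' (s : Set F)) := (s.finite_toSet.image _).to_subtype
      exact IntermediateField.finiteDimensional_adjoin
        fun x _ => Algebra.IsIntegral.isIntegral x
    refine ⟨IntermediateField.adjoin K ((fun a : F => (a : E)) '' (s : Set F)),
      fun a ha => IntermediateField.subset_adjoin K _ ⟨a, ha, rfl⟩, h _ hfin ?_⟩
    rw [IntermediateField.adjoin_le_iff]
    rintro _ ⟨a, -, rfl⟩
    exact a.2
  choose L hL f using key
  replace f := fun s => (f s).some
  have hroot (s : Finset F) (a : s) :
      f s ⟨(a : F), hL s a a.2⟩ ∈ (minpoly ℚ ((a : F) : E)).rootSet ℝ := by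
    rw [Polynomial.mem_rootSet]
    refine ⟨minpoly.ne_zero (hint _), ?_⟩
    have h0 : Polynomial.aeval (⟨(a : F), hL s a a.2⟩ : L s) (minpoly ℚ ((a : F) : E)) = 0 := by
      apply (algebraMap (L s) E).injective
      rw [← Polynomial.aeval_algebraMap_apply]
      simp
    have := Polynomial.aeval_algHom_apply (f s).toRatAlgHom
      (⟨(a : F), hL s a a.2⟩ : L s) (minpoly ℚ ((a : F) : E))
    rw [h0, map_zero] at this
    exact this
  let g : (s : Finset F) → (a : s) → β a := fun s a => ⟨_, hroot s a⟩
  obtain ⟨χ, hχ⟩ := Finset.rado_selection_subtype (β := β) g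
  -- on any finite set, `χ` is the restriction of a ring homomorphism
  have hloc (s : Finset F) : ∃ (t : Finset F) (hst : s ⊆ t), ∀ (x : F) (hx : x ∈ s),
      (χ x : ℝ) = f t ⟨x, hL t x (hst hx)⟩ := by
    obtain ⟨t, hst, ht⟩ := hχ s
    exact ⟨t, hst, fun x hx => congrArg Subtype.val (ht ⟨x, hx⟩)⟩
  refine ⟨{ toFun := fun x => (χ x : ℝ), map_one' := ?_, map_mul' := ?_,
            map_zero' := ?_, map_add' := ?_ }⟩
  · obtain ⟨t, hst, ht⟩ := hloc {1}
    rw [ht 1 (by simp)]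
    exact map_one (f t)
  · intro x y
    obtain ⟨t, hst, ht⟩ := hloc {x, y, x * y}
    rw [ht x (by simp), ht y (by simp), ht (x * y) (by simp)]
    exact map_mul (f t) ⟨x, _⟩ ⟨y, _⟩
  · obtain ⟨t, hst, ht⟩ := hloc {0}
    rw [ht 0 (by simp)]
    exact map_zero (f t)
  · intro x y
    obtain ⟨t, hst, ht⟩ := hloc {x, y, x + y}
    rw [ht x (by simp), ht y (by simp), ht (x + y) (by simp)]
    exact map_add (f t) ⟨x, _⟩ ⟨y, _⟩

/-- A real embedding of `F` extends to an embedding of a normal extension `E` into `ℂ`, along which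
complex conjugation restricts to an automorphism over `F`. -/
theorem exists_conjugation
    {F : Type*} [Field F] {E : Type*} [Field E] [Algebra F E] [Normal F E] (φ : F →+* ℝ) :
    ∃ (ψ : E →+* ℂ) (τ : E ≃ₐ[F] E), ∀ x, ψ (τ x) = starRingEnd ℂ (ψ x) := by
  let : Algebra F ℂ := (Complex.ofRealHom.comp φ).toAlgebra
  let ψ : E →ₐ[F] ℂ := IsAlgClosed.lift
  let : Algebra E ℂ := ψ.toRingHom.toAlgebra
  have : IsScalarTower F E ℂ := IsScalarTower.of_algebraMap_eq fun x => (ψ.commutes x).symm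
  let c : ℂ →ₐ[F] ℂ := { starRingEnd ℂ with
    commutes' := fun x => Complex.conj_ofReal (φ x) }
  let τ : E ≃ₐ[F] E := AlgEquiv.ofBijective (c.restrictNormal E)
    (AlgHom.normal_bijective F E E _)
  exact ⟨ψ.toRingHom, τ, fun x => c.restrictNormal_commutes E x⟩

/-- The centralizer of `σ` is closed, so by infinite Galois theory it contains every automorphism
over the fixed field of `σ`. -/
theorem commute_of_fixes_fixedField
    {K : Type*} [Field K] {E : Type*} [Field E] [Algebra K E] [IsGalois K E]
    (σ τ : E ≃ₐ[K] E)
    (h : ∀ x ∈ IntermediateField.fixedField (Subgroup.zpowers σ), τ x = x) (x : E) :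
    σ (τ x) = τ (σ x) := by
  let C : ClosedSubgroup (E ≃ₐ[K] E) :=
    { Subgroup.centralizer {σ} with isClosed' := Set.isClosed_centralizer {σ} }
  have hle : Subgroup.zpowers σ ≤ C.toSubgroup := by
    rw [Subgroup.zpowers_le]
    change σ ∈ Subgroup.centralizer {σ}
    simp [Subgroup.mem_centralizer_iff]
  have hτ : τ ∈ C.toSubgroup := by
    rw [← InfiniteGalois.fixingSubgroup_fixedField C, IntermediateField.mem_fixingSubgroup_iff]
    exact fun y hy => h y (IntermediateField.fixedField_le hle hy)
  have hc : σ * τ = τ * σ := by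
    change τ ∈ Subgroup.centralizer {σ} at hτ
    simpa [Subgroup.mem_centralizer_iff] using hτ
  exact DFunLike.congr_fun hc x

/-- An automorphism `σ` commuting with a complex conjugation `τ` is the identity on the real closed
field fixed by `τ`: it preserves squares, hence the order, and `ℚ` is dense. -/
theorem apply_eq_self_of_conjugation_fixed
    {E : Type*} [Field E] [IsAlgClosed E] (ψ : E →+* ℂ) (σ τ : E ≃+* E)
    (hτ : ∀ x, ψ (τ x) = starRingEnd ℂ (ψ x)) (hc : ∀ x, σ (τ x) = τ (σ x))
    (x : E) (hx : τ x = x) : σ x = x := by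
  have hreal (y : E) (hy : τ y = y) : (((ψ y).re : ℝ) : ℂ) = ψ y :=
    Complex.conj_eq_iff_re.mp (by rw [← hτ, hy])
  -- the order on `E^τ` is determined by its squares
  have hpos (y : E) (hy : τ y = y) (h0 : 0 < (ψ y).re) : 0 ≤ (ψ (σ y)).re := by
    obtain ⟨z, hz⟩ := IsAlgClosed.exists_pow_nat_eq y (n := 2) (by norm_num)
    have hzψ : ψ z ^ 2 = (((ψ y).re : ℝ) : ℂ) := by rw [← map_pow, hz, hreal y hy]
    have him : (ψ z).im = 0 := by
      have h1 := congrArg Complex.re hzψ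
      have h2 := congrArg Complex.im hzψ
      simp only [pow_two, Complex.mul_re, Complex.mul_im, Complex.ofReal_re,
        Complex.ofReal_im] at h1 h2
      by_contra hne
      have hre : (ψ z).re = 0 := by
        have : (ψ z).re * (ψ z).im = 0 := by linarith
        exact (mul_eq_zero.mp this).resolve_right hne
      rw [hre] at h1
      nlinarith [sq_nonneg (ψ z).im]
    have hzτ : τ z = z := by
      apply ψ.injective
      rw [hτ]
      exact Complex.conj_eq_iff_im.mpr him
    have hσz : (((ψ (σ z)).re : ℝ) : ℂ) = ψ (σ z) := hreal _ (by rw [← hc, hzτ])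
    rw [← hz, map_pow, map_pow, ← hσz, ← Complex.ofReal_pow, Complex.ofReal_re]
    positivity
  have hσx : τ (σ x) = σ x := by rw [← hc, hx]
  have : CharZero E := ψ.charZero
  have hψq (q : ℚ) : (ψ (q : E)).re = (q : ℝ) := by simp
  have hre : (ψ (σ x)).re = (ψ x).re := by
    by_contra hne
    rcases lt_or_gt_of_ne hne with hlt | hlt
    · obtain ⟨q, hq1, hq2⟩ := exists_rat_btwn hlt
      have := hpos (x - q) (by simp [hx]) (by rw [map_sub, Complex.sub_re, hψq]; linarith)
      rw [map_sub, map_sub, map_ratCast, Complex.sub_re, hψq] at this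
      linarith
    · obtain ⟨q, hq1, hq2⟩ := exists_rat_btwn hlt
      have := hpos (q - x) (by simp [hx]) (by rw [map_sub, Complex.sub_re, hψq]; linarith)
      rw [map_sub, map_sub, map_ratCast, Complex.sub_re, hψq] at this
      linarith
  apply ψ.injective
  rw [← hreal x hx, ← hreal _ hσx, hre]

/-- Proposition `prop:comptot`: let `K` be a number field with algebraic closure `K̄` and
`σ ∈ Gal(K̄/K)`. If `σ` is not a complex conjugation automorphism (its order is not `2`),
then there is a totally imaginary finite extension `L` of `K` (one admitting no ring
homomorphism into `ℝ`) contained in the fixed field `K̄^σ`. -/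
theorem exists_totally_imaginary_fixed_extension_of_not_conjugation
    (K : Type*) [Field K] [NumberField K]
    (Kbar : Type*) [Field Kbar] [Algebra K Kbar] [IsAlgClosure K Kbar]
    (σ : Kbar ≃ₐ[K] Kbar) (hσ : orderOf σ ≠ 2) :
    ∃ L : IntermediateField K Kbar, FiniteDimensional K L ∧
      L ≤ IntermediateField.fixedField (Subgroup.zpowers σ) ∧
      IsEmpty (L →+* ℝ) := by
  by_contra hcon
  have : IsAlgClosed Kbar := IsAlgClosure.isAlgClosed K
  have : Algebra.IsAlgebraic K Kbar := IsAlgClosure.isAlgebraic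
  have : Normal K Kbar := IsAlgClosure.normal K Kbar
  have : IsGalois K Kbar := ⟨⟩
  have : CharZero Kbar := charZero_of_injective_algebraMap (algebraMap K Kbar).injective
  obtain ⟨φ⟩ := exists_realEmbedding_of_finite
    (IntermediateField.fixedField (Subgroup.zpowers σ)) fun L hfin hle => by
      by_contra hne
      exact hcon ⟨L, hfin, hle, not_nonempty_iff.mp hne⟩
  obtain ⟨ψ, τ', hψτ⟩ := exists_conjugation (E := Kbar) φ
  let τ : Kbar ≃ₐ[K] Kbar := τ'.restrictScalars K
  replace hψτ (x : Kbar) : ψ (τ x) = starRingEnd ℂ (ψ x) := hψτ x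
  have hc := commute_of_fixes_fixedField σ τ fun x hx => τ'.commutes ⟨x, hx⟩
  have hττ (x : Kbar) : τ (τ x) = x := by
    apply ψ.injective
    rw [hψτ, hψτ, Complex.conj_conj]
  have hfix (x : Kbar) (hx : τ x = x) : σ x = x :=
    apply_eq_self_of_conjugation_fixed ψ σ.toRingEquiv τ.toRingEquiv hψτ hc x hx
  obtain ⟨j, hj⟩ := IsAlgClosed.exists_pow_nat_eq (-1 : Kbar) (n := 2) (by norm_num)
  have hj0 : j ≠ 0 := by rintro rfl; norm_num at hj
  -- if `σ` fixed `j`, then `φ j` would be a real square root of `-1`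
  have hσj' : σ j ≠ j := fun hfixed => by
    have hmem : j ∈ IntermediateField.fixedField (Subgroup.zpowers σ) := by
      rw [IntermediateField.mem_fixedField_iff]
      intro f hf
      have hle : Subgroup.zpowers σ ≤ MulAction.stabilizer (Kbar ≃ₐ[K] Kbar) j := by
        rw [Subgroup.zpowers_le]
        exact hfixed
      exact hle hf
    have hsq : (⟨j, hmem⟩ : IntermediateField.fixedField (Subgroup.zpowers σ)) ^ 2 = -1 :=
      Subtype.ext hj
    have := congrArg φ hsq
    rw [map_pow, map_neg, map_one] at this
    nlinarith [sq_nonneg (φ ⟨j, hmem⟩)]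
  have hneg (ρ : Kbar ≃ₐ[K] Kbar) (hρ : ρ j ≠ j) : ρ j = -j := by
    have : ρ j ^ 2 = j ^ 2 := by rw [← map_pow, hj, map_neg, map_one]
    exact (sq_eq_sq_iff_eq_or_eq_neg.mp this).resolve_left hρ
  have hσj := hneg σ hσj'
  have hτj := hneg τ fun h => hσj' (hfix j h)
  -- compare `σ` and `τ` on the `τ`-fixed elements `x + τ x` and `j (x - τ x)`
  have hστ : σ = τ := by
    ext x
    have h1 := hfix (x + τ x) (by rw [map_add, hττ, add_comm])
    have h2 := hfix (j * (x - τ x)) (by rw [map_mul, map_sub, hττ, hτj]; ring)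
    rw [map_mul, map_sub, hσj] at h2
    rw [map_add] at h1
    have h3 : σ x - σ (τ x) = τ x - x := mul_left_cancel₀ hj0 (by linear_combination -h2)
    have h4 : (2 : Kbar) * σ x = 2 * τ x := by linear_combination h1 + h3
    exact mul_left_cancel₀ two_ne_zero h4
  apply hσ
  apply orderOf_eq_prime
  · ext x
    rw [hστ, pow_two]
    exact hττ x
  · rintro rfl
    exact hσj' rfl
end
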